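/- Let R be an integral root system (not necessarily reduced) with positive subsystem R⁺ and W-invariant multiplicity k : R → (0,∞). Then for every element τ ∈ W with τ ≠ id that is a rotation (i.e. τ = r_β ∘ r_α for some reflections with τ a nontrivial product of two reflections), and for every regular x ∈ a: Σ_{α, β ∈ R⁺, r_β ∘ r_α = τ} k_α k_β (α, β) ( coth((α,x)/2) coth((β,x)/2) − 1 ) = 0. -/

import Mathlib

open scoped BigOperators RealInnerProductSpace Classical

noncomputable section

variable {E : Type*} [NormedAddCommGroup E] [InnerProductSpace ℝ E] [FiniteDimensional ℝ E]

/-- The coroot `α∨ = 2α/|α|²`. -/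
def coroot (α : E) : E := (2 / ⟪α, α⟫) • α

/-- The orthogonal reflection `r_α x = x - (α∨, x) α`. -/
def rRefl (α : E) (x : E) : E := x - ⟪coroot α, x⟫ • α

/-- Data of an integral root system with positive subsystem and
a Weyl-invariant positive multiplicity function. -/
structure HOData (E : Type*) [NormedAddCommGroup E] [InnerProductSpace ℝ E] : Type _ where
  R : Finset E
  Rpos : Finset E
  k : E → ℝ
  k_pos : ∀ α ∈ R, 0 < k α
  root_ne_zero : ∀ α ∈ R, α ≠ 0
  pos_subset : Rpos ⊆ R
  pos_char : ∃ u : E, ∀ α ∈ R, (α ∈ Rpos ↔ 0 < ⟪α, u⟫)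
  pos_or_neg : ∀ α ∈ R, α ∈ Rpos ∨ -α ∈ Rpos
  neg_mem : ∀ α ∈ R, -α ∈ R
  integral : ∀ α ∈ R, ∀ β ∈ R, ∃ n : ℤ, ⟪coroot α, β⟫ = (n : ℝ)
  refl_mem : ∀ α ∈ R, ∀ β ∈ R, rRefl α β ∈ R
  k_inv : ∀ α ∈ R, ∀ β ∈ R, k (rRefl α β) = k β

/-- The Weyl group: the subgroup of linear isometries generated by the root reflections. -/
def weylGroup (D : HOData E) : Subgroup (E ≃ₗᵢ[ℝ] E) :=
  Subgroup.closure {w : E ≃ₗᵢ[ℝ] E | ∃ α ∈ D.R, ∀ x, w x = rRefl α x}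

/-- `ρ = (1/2) Σ_{α ∈ R⁺} k_α α`. -/
def rhoHO (D : HOData E) : E := (2:ℝ)⁻¹ • ∑ α ∈ D.Rpos, D.k α • α

/-- Regular points. -/
def HORegular (D : HOData E) (x : E) : Prop := ∀ α ∈ D.R, ⟪α, x⟫ ≠ 0

/-- The (open) positive Weyl chamber. -/
def posChamber (D : HOData E) : Set E := {x | ∀ α ∈ D.Rpos, 0 < ⟪α, x⟫}

/-- The positive indivisible roots `R₀⁺`. -/
def Rpos0 (D : HOData E) : Finset E := D.Rpos.filter (fun α => (2:ℝ)⁻¹ • α ∉ D.R)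

/-- The Opdam function `G_λ` for a real parameter `λ`: an analytic function,
normalized at `0`, satisfying the Cherednik differential-difference system. -/
def IsOpdamR (D : HOData E) (lam : E) (G : E → ℝ) : Prop :=
  AnalyticOnNhd ℝ G Set.univ ∧ G 0 = 1 ∧
  ∀ ξ x, HORegular D x →
    fderiv ℝ G x ξ =
      (∑ α ∈ D.Rpos, D.k α * ⟪α, ξ⟫ / (1 - Real.exp (-⟪α, x⟫)) * (G (rRefl α x) - G x))
      + ⟪rhoHO D + lam, ξ⟫ * G x

/-- The Opdam function `G_λ` for a complex parameter `λ = l1 + i l2 ∈ h`. -/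
def IsOpdamC (D : HOData E) (l1 l2 : E) (G : E → ℂ) : Prop :=
  AnalyticOnNhd ℝ G Set.univ ∧ G 0 = 1 ∧
  ∀ ξ x, HORegular D x →
    fderiv ℝ G x ξ =
      (∑ α ∈ D.Rpos, ((D.k α * ⟪α, ξ⟫ / (1 - Real.exp (-⟪α, x⟫)) : ℝ) : ℂ)
          * (G (rRefl α x) - G x))
      + (((⟪rhoHO D + l1, ξ⟫ : ℝ) : ℂ) + Complex.I * ((⟪l2, ξ⟫ : ℝ) : ℂ)) * G x

/-- The symmetrization `F(x) = |W|⁻¹ Σ_{w ∈ W} G(w x)` (real valued case). -/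
def Fsym (D : HOData E) [Fintype (weylGroup D)] (G : E → ℝ) (x : E) : ℝ :=
  (Fintype.card (weylGroup D) : ℝ)⁻¹ * ∑ w : weylGroup D, G (w.1 x)

/-- The symmetrization `F(x) = |W|⁻¹ Σ_{w ∈ W} G(w x)` (complex valued case). -/
def FsymC (D : HOData E) [Fintype (weylGroup D)] (G : E → ℂ) (x : E) : ℂ :=
  (Fintype.card (weylGroup D) : ℂ)⁻¹ * ∑ w : weylGroup D, G (w.1 x)

/-- `max_{w ∈ W} (w λ, x)`. -/
def maxW (D : HOData E) [Fintype (weylGroup D)] (lam x : E) : ℝ :=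
  ⨆ w : weylGroup D, ⟪w.1 lam, x⟫

/-- Hyperbolic cotangent. -/
def cothR (a : ℝ) : ℝ := Real.cosh a / Real.sinh a

/-- The pairs `(α, β)` of positive roots with `r_β ∘ r_α = τ`. -/
def rotPairs (D : HOData E) (τ : E → E) : Finset (E × E) :=
  (D.Rpos ×ˢ D.Rpos).filter (fun p => (fun x => rRefl p.2 (rRefl p.1 x)) = τ)

set_option linter.unusedSectionVars false

theorem inner_coroot (α x : E) : ⟪coroot α, x⟫ = 2 / ⟪α, α⟫ * ⟪α, x⟫ := by
  simp [coroot, real_inner_smul_left]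

theorem inner_coroot_self {α : E} (hα : α ≠ 0) : ⟪coroot α, α⟫ = 2 := by
  have h : ⟪α, α⟫ ≠ 0 := inner_self_ne_zero.mpr hα
  rw [inner_coroot]
  field_simp

theorem inner_rRefl_rRefl {α : E} (hα : α ≠ 0) (x y : E) :
    ⟪rRefl α x, rRefl α y⟫ = ⟪x, y⟫ := by
  have h : ⟪α, α⟫ ≠ 0 := inner_self_ne_zero.mpr hα
  simp only [rRefl, inner_sub_left, inner_sub_right, real_inner_smul_left, real_inner_smul_right,
    inner_coroot, real_inner_comm α x]
  field_simp
  ring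

theorem rRefl_self {α : E} (hα : α ≠ 0) : rRefl α α = -α := by
  rw [rRefl, inner_coroot_self hα]
  module

theorem rRefl_rRefl {α : E} (hα : α ≠ 0) (x : E) : rRefl α (rRefl α x) = x := by
  simp only [rRefl, inner_sub_right, real_inner_smul_right, inner_coroot_self hα]
  module

theorem rRefl_smul_left {t : ℝ} (ht : t ≠ 0) (α x : E) : rRefl (t • α) x = rRefl α x := by
  simp only [rRefl, inner_coroot, real_inner_smul_left, real_inner_smul_right, smul_smul]
  congr 2
  field_simp

theorem rRefl_neg_left (α x : E) : rRefl (-α) x = rRefl α x := by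
  simp [rRefl, coroot]

theorem rRefl_neg_right (α x : E) : rRefl α (-x) = -rRefl α x := by
  simp only [rRefl, inner_neg_right]
  module

/-- Conjugating a reflection by a reflection. -/
theorem rRefl_rRefl_left {β : E} (hβ : β ≠ 0) (α x : E) :
    rRefl (rRefl β α) x = rRefl β (rRefl α (rRefl β x)) := by
  have h : ⟪coroot (rRefl β α), x⟫ = ⟪coroot α, rRefl β x⟫ := by
    rw [inner_coroot, inner_coroot, inner_rRefl_rRefl hβ, ← inner_rRefl_rRefl hβ α (rRefl β x),
      rRefl_rRefl hβ]
  have hlin (y z : E) (t : ℝ) : rRefl β (y - t • z) = rRefl β y - t • rRefl β z := by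
    simp only [rRefl, inner_sub_right, real_inner_smul_right]
    module
  rw [rRefl, h, rRefl.eq_1 α (rRefl β x), hlin, rRefl_rRefl hβ]

/-- The map `(α, β) ↦ (β, -r_β α)`, which preserves the product `r_β ∘ r_α`. -/
def rotStep (p : E × E) : E × E := (p.2, -rRefl p.2 p.1)

theorem rotStep_eq (p : E × E) :
    rotStep p = (p.2, ⟪coroot p.2, p.1⟫ • p.2 - p.1) := by
  simp [rotStep, rRefl]

theorem rotStep_neg (p : E × E) : rotStep (-p) = -rotStep p := by
  ext <;> simp [rotStep, rRefl_neg_left, rRefl_neg_right]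

theorem rotStep_iterate_neg (i : ℕ) (p : E × E) : rotStep^[i] (-p) = -rotStep^[i] p := by
  induction i generalizing p with
  | zero => rfl
  | succ i ih => rw [Function.iterate_succ_apply, rotStep_neg, ih, Function.iterate_succ_apply]

theorem inner_rotStep {p : E × E} (h : p.2 ≠ 0) :
    ⟪(rotStep p).1, (rotStep p).2⟫ = ⟪p.1, p.2⟫ := by
  have := inner_rRefl_rRefl h p.2 p.1
  rw [rRefl_self h, inner_neg_left] at this
  rw [rotStep, inner_neg_right, this, real_inner_comm]

theorem inner_coroot_snd_rotStep {p : E × E} (h : p.2 ≠ 0) :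
    ⟪coroot (rotStep p).2, (rotStep p).1⟫ = ⟪coroot p.1, p.2⟫ := by
  rw [inner_coroot, inner_coroot, real_inner_comm (rotStep p).1, inner_rotStep h]
  simp only [rotStep, inner_neg_neg, inner_rRefl_rRefl h]

theorem inner_coroot_fst_rotStep {p : E × E} (h : p.2 ≠ 0) :
    ⟪coroot (rotStep p).1, (rotStep p).2⟫ = ⟪coroot p.2, p.1⟫ := by
  rw [inner_coroot, inner_coroot, inner_rotStep h, real_inner_comm p.2]
  simp [rotStep]

/-- Functions on the roots that are odd and satisfy the addition formula of `coth`. -/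
structure IsCothLike (D : HOData E) (c : E → ℝ) : Prop where
  neg : ∀ α, c (-α) = -c α
  add : ∀ α ∈ D.R, ∀ β ∈ D.R, β - α ∈ D.R → c α * c β + c (β - α) * (c β - c α) = 1

theorem isCothLike_cothR (D : HOData E) {x : E} (hx : HORegular D x) :
    IsCothLike D (fun α => cothR (⟪α, x⟫ / 2)) where
  neg α := by simp [cothR, inner_neg_left, neg_div, div_neg]
  add α hα β hβ hβα := by
    have key (a b : ℝ) (ha : a ≠ 0) (hb : b ≠ 0) (hba : b - a ≠ 0) :
        cothR a * cothR b + cothR (b - a) * (cothR b - cothR a) = 1 := by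
      have ha' := Real.sinh_ne_zero.mpr ha
      have hb' := Real.sinh_ne_zero.mpr hb
      have hba' := Real.sinh_ne_zero.mpr hba
      have hdiff : cothR b - cothR a = -Real.sinh (b - a) / (Real.sinh a * Real.sinh b) := by
        rw [cothR, cothR, Real.sinh_sub]
        field_simp
        ring
      rw [hdiff, cothR, cothR, cothR]
      have hc := Real.cosh_sub b a
      field_simp
      linear_combination -hc
    have h := hx _ hβα
    rw [inner_sub_left] at h
    have := key (⟪α, x⟫ / 2) (⟪β, x⟫ / 2) (by simpa using hx α hα) (by simpa using hx β hβ)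
      (by contrapose! h; linarith)
    simpa only [inner_sub_left, sub_div] using this

theorem isCothLike_sign (D : HOData E) {u : E} (hu : HORegular D u) :
    IsCothLike D (fun α => (SignType.sign ⟪α, u⟫ : ℝ)) where
  neg α := by simp [inner_neg_left, Left.sign_neg]
  add α hα β hβ hβα := by
    have h := hu _ hβα
    rw [inner_sub_left] at h ⊢
    rcases (hu α hα).lt_or_gt with ha | ha <;> rcases (hu β hβ).lt_or_gt with hb | hb
    · simp [sign_neg ha, sign_neg hb]
    · simp [sign_neg ha, sign_pos hb, sign_pos (show 0 < ⟪β, u⟫ - ⟪α, u⟫ by linarith)]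
    · simp [sign_pos ha, sign_neg hb, sign_neg (show ⟪β, u⟫ - ⟪α, u⟫ < 0 by linarith)]
    · simp [sign_pos ha, sign_pos hb]

/-- Pairs of roots at an acute angle whose product of reflections is `τ`. -/
def acutePairs (D : HOData E) (τ : E → E) : Finset (E × E) :=
  (D.R ×ˢ D.R).filter
    (fun p => (fun x => rRefl p.2 (rRefl p.1 x)) = τ ∧ 0 < ⟪p.1, p.2⟫)

theorem mem_acutePairs {D : HOData E} {τ : E → E} {p : E × E} :
    p ∈ acutePairs D τ ↔ (p.1 ∈ D.R ∧ p.2 ∈ D.R) ∧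
      (fun x => rRefl p.2 (rRefl p.1 x)) = τ ∧ 0 < ⟪p.1, p.2⟫ := by
  simp [acutePairs]

theorem rotStep_mem_acutePairs {D : HOData E} {τ : E → E} {p : E × E}
    (hp : p ∈ acutePairs D τ) : rotStep p ∈ acutePairs D τ := by
  rw [mem_acutePairs] at hp ⊢
  obtain ⟨⟨h1, h2⟩, h3, h4⟩ := hp
  have h0 := D.root_ne_zero _ h2
  refine ⟨⟨h2, D.neg_mem _ (D.refl_mem _ h2 _ h1)⟩, ?_, by rwa [inner_rotStep h0]⟩
  rw [← h3]
  funext x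
  simp [rotStep, rRefl_neg_left, rRefl_rRefl_left h0, rRefl_rRefl h0]

theorem rotStep_iterate_mem_acutePairs {D : HOData E} {τ : E → E} {p : E × E}
    (hp : p ∈ acutePairs D τ) (i : ℕ) : rotStep^[i] p ∈ acutePairs D τ := by
  induction i with
  | zero => exact hp
  | succ i ih => rw [Function.iterate_succ_apply']; exact rotStep_mem_acutePairs ih

theorem sum_acutePairs_rotStep (D : HOData E) (τ : E → E) (f : E × E → ℝ) :
    ∑ p ∈ acutePairs D τ, f (rotStep p) = ∑ p ∈ acutePairs D τ, f p := by
  have hinj : Set.InjOn rotStep (acutePairs D τ : Set (E × E)) := by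
    rintro ⟨a, b⟩ hp ⟨a', b'⟩ - h
    have hb := D.root_ne_zero _ (mem_acutePairs.mp hp).1.2
    simp only [rotStep, Prod.mk.injEq, neg_inj] at h
    obtain ⟨rfl, h⟩ := h
    rw [← rRefl_rRefl hb a, h, rRefl_rRefl hb]
  have himage : (acutePairs D τ).image rotStep = acutePairs D τ :=
    Finset.eq_of_subset_of_card_le
      (Finset.image_subset_iff.mpr fun p hp => rotStep_mem_acutePairs hp)
      (Finset.card_image_of_injOn hinj).ge
  conv_rhs => rw [← himage, Finset.sum_image hinj]

theorem sum_acutePairs_rotStep_iterate (D : HOData E) (τ : E → E) (f : E × E → ℝ) (i : ℕ) :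
    ∑ p ∈ acutePairs D τ, f (rotStep^[i] p) = ∑ p ∈ acutePairs D τ, f p := by
  induction i with
  | zero => rfl
  | succ i ih =>
    simp only [Function.iterate_succ_apply]
    rw [sum_acutePairs_rotStep D τ (fun p => f (rotStep^[i] p)), ih]

/-- The Cartan integers of a pair of roots whose reflections have a nontrivial product. -/
theorem cartan_integers_of_mem_acutePairs {D : HOData E} {τ : E → E} (hτ : τ ≠ id) {p : E × E}
    (hp : p ∈ acutePairs D τ) :
    ∃ m n : ℤ, ⟪coroot p.2, p.1⟫ = m ∧ ⟪coroot p.1, p.2⟫ = n ∧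
      ((m = 1 ∧ n = 1) ∨ (m = 1 ∧ n = 2) ∨ (m = 2 ∧ n = 1) ∨ (m = 1 ∧ n = 3) ∨
        (m = 3 ∧ n = 1)) := by
  obtain ⟨⟨h1, h2⟩, h3, h4⟩ := mem_acutePairs.mp hp
  have h1' := D.root_ne_zero _ h1
  have h2' := D.root_ne_zero _ h2
  have p1 : 0 < ⟪p.1, p.1⟫ := real_inner_self_pos.mpr h1'
  have p2 : 0 < ⟪p.2, p.2⟫ := real_inner_self_pos.mpr h2'
  obtain ⟨m, hm⟩ := D.integral _ h2 _ h1
  obtain ⟨n, hn⟩ := D.integral _ h1 _ h2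
  refine ⟨m, n, hm, hn, ?_⟩
  rw [inner_coroot, real_inner_comm p.1] at hm
  rw [inner_coroot] at hn
  have hm0 : 0 < m := by exact_mod_cast hm ▸ (by positivity : 0 < 2 / ⟪p.2, p.2⟫ * ⟪p.1, p.2⟫)
  have hn0 : 0 < n := by exact_mod_cast hn ▸ (by positivity : 0 < 2 / ⟪p.1, p.1⟫ * ⟪p.1, p.2⟫)
  have hlt : ⟪p.1, p.2⟫ * ⟪p.1, p.2⟫ < ⟪p.1, p.1⟫ * ⟪p.2, p.2⟫ := by
    refine lt_of_le_of_ne (real_inner_mul_inner_self_le _ _) fun heq => hτ ?_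
    have hnorm : ⟪p.1, p.2⟫ = ‖p.1‖ * ‖p.2‖ := by
      rw [real_inner_self_eq_norm_sq, real_inner_self_eq_norm_sq] at heq
      nlinarith [norm_pos_iff.mpr h1', norm_pos_iff.mpr h2',
        mul_pos (norm_pos_iff.mpr h1') (norm_pos_iff.mpr h2')]
    have hpar := (inner_eq_norm_mul_iff_real).mp hnorm
    rw [← h3]
    funext x
    rw [← rRefl_smul_left (norm_ne_zero_iff.mpr h1') p.2, ← hpar,
      rRefl_smul_left (norm_ne_zero_iff.mpr h2'), rRefl_rRefl h1', id]
  have hmn : m * n < 4 := by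
    have : (m * n : ℝ) < 4 := by
      rw [← hm, ← hn]
      have : 2 / ⟪p.2, p.2⟫ * ⟪p.1, p.2⟫ * (2 / ⟪p.1, p.1⟫ * ⟪p.1, p.2⟫)
          = 4 * (⟪p.1, p.2⟫ * ⟪p.1, p.2⟫) / (⟪p.1, p.1⟫ * ⟪p.2, p.2⟫) := by
        field_simp
        ring
      rw [this, div_lt_iff₀ (by positivity)]
      linarith
    exact_mod_cast this
  have hm3 : m ≤ 3 := by nlinarith
  have hn3 : n ≤ 3 := by nlinarith
  interval_cases m <;> interval_cases n <;> simp_all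

/-- A step of the iteration in terms of the Cartan integers. -/
theorem exists_rotStep_eq_of_cartan {D : HOData E} {τ : E → E} {a b : E} {m n : ℝ}
    (hp : (a, b) ∈ acutePairs D τ ∧ ⟪coroot b, a⟫ = m ∧ ⟪coroot a, b⟫ = n) :
    ∃ g, g = m • b - a ∧ g ∈ D.R ∧ rotStep (a, b) = (b, g) ∧
      ((b, g) ∈ acutePairs D τ ∧ ⟪coroot g, b⟫ = n ∧ ⟪coroot b, g⟫ = m) := by
  obtain ⟨h, rfl, rfl⟩ := hp
  have hb : (a, b).2 ≠ 0 := D.root_ne_zero _ (mem_acutePairs.mp h).1.2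
  have e := rotStep_eq (a, b)
  have h1 := inner_coroot_snd_rotStep hb
  have h2 := inner_coroot_fst_rotStep hb
  have h3 := rotStep_mem_acutePairs h
  rw [e] at h1 h2 h3
  exact ⟨_, rfl, (mem_acutePairs.mp h3).1.2, e, h3, h1, h2⟩

theorem IsCothLike.add_of_add_eq {D : HOData E} {c : E → ℝ} (hc : IsCothLike D c) {α β γ : E}
    (hα : α ∈ D.R) (hβ : β ∈ D.R) (hγ : γ ∈ D.R) (h : α + γ = β) :
    c α * c β + c γ * (c β - c α) = 1 := by
  obtain rfl : γ = β - α := eq_sub_of_add_eq' h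
  exact hc.add α hα β hβ hγ

/-- The orbit of a pair under `rotStep` closes up to sign, and the sum over it of a product of
values of a `coth`-like function is independent of the function. -/
theorem exists_sum_rotStep_iterate_eq {D : HOData E} {τ : E → E} (hτ : τ ≠ id) {p : E × E}
    (hp : p ∈ acutePairs D τ) :
    ∃ N : ℕ, N ∣ 12 ∧ rotStep^[N] p = -p ∧ ∃ K : ℝ, ∀ c, IsCothLike D c →
      ∑ i ∈ Finset.range N, c (rotStep^[i] p).1 * c (rotStep^[i] p).2 = K := by
  obtain ⟨a, b⟩ := p
  obtain ⟨m, n, hm, hn, hmn⟩ := cartan_integers_of_mem_acutePairs hτ hp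
  obtain ⟨ha, hb⟩ := (mem_acutePairs.mp hp).1
  obtain ⟨g2, d2, r2, e1, h1⟩ := exists_rotStep_eq_of_cartan ⟨hp, hm, hn⟩
  obtain ⟨g3, d3, r3, e2, h2⟩ := exists_rotStep_eq_of_cartan h1
  obtain ⟨g4, d4, r4, e3, h3⟩ := exists_rotStep_eq_of_cartan h2
  obtain ⟨g5, d5, r5, e4, h4⟩ := exists_rotStep_eq_of_cartan h3
  obtain ⟨g6, d6, -, e5, h5⟩ := exists_rotStep_eq_of_cartan h4
  obtain ⟨g7, d7, -, e6, -⟩ := exists_rotStep_eq_of_cartan h5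
  dsimp only at ha hb
  rcases hmn with ⟨rfl, rfl⟩ | ⟨rfl, rfl⟩ | ⟨rfl, rfl⟩ | ⟨rfl, rfl⟩ | ⟨rfl, rfl⟩ <;>
    push_cast at d2 d3 d4 d5 d6 d7
  · have hg3 : g3 = -a := by rw [d3, d2]; module
    have hg4 : g4 = -b := by rw [d4, hg3, d2]; module
    refine ⟨3, by norm_num, by simpa [e1, e2, e3] using ⟨hg3, hg4⟩, 1, fun c hc => ?_⟩
    have t := hc.add_of_add_eq ha hb r2 (by rw [d2]; module)
    simp only [Finset.sum_range_succ, Finset.sum_range_zero, Function.iterate_succ_apply,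
      Function.iterate_zero_apply, e1, e2, hg3, hc.neg]
    linear_combination t
  · have hg4 : g4 = -a := by rw [d4, d3, d2]; module
    have hg5 : g5 = -b := by rw [d5, hg4, d3, d2]; module
    refine ⟨4, by norm_num, by simpa [e1, e2, e3, e4] using ⟨hg4, hg5⟩, 2, fun c hc => ?_⟩
    have t1 := hc.add_of_add_eq ha hb r2 (by rw [d2]; module)
    have t2 := hc.add_of_add_eq ha r2 r3 (by rw [d3, d2]; module)
    simp only [Finset.sum_range_succ, Finset.sum_range_zero, Function.iterate_succ_apply,
      Function.iterate_zero_apply, e1, e2, e3, hg4, hc.neg]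
    linear_combination t1 + t2
  · have hg4 : g4 = -a := by rw [d4, d3, d2]; module
    have hg5 : g5 = -b := by rw [d5, hg4, d3, d2]; module
    refine ⟨4, by norm_num, by simpa [e1, e2, e3, e4] using ⟨hg4, hg5⟩, 2, fun c hc => ?_⟩
    have t1 := hc.add_of_add_eq ha hb r3 (by rw [d3, d2]; module)
    have t2 := hc.add_of_add_eq hb r2 r3 (by rw [d3, d2]; module)
    simp only [Finset.sum_range_succ, Finset.sum_range_zero, Function.iterate_succ_apply,
      Function.iterate_zero_apply, e1, e2, e3, hg4, hc.neg]
    linear_combination t1 + t2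
  · have hg6 : g6 = -a := by rw [d6, d5, d4, d3, d2]; module
    have hg7 : g7 = -b := by rw [d7, hg6, d5, d4, d3, d2]; module
    refine ⟨6, by norm_num, by simpa [e1, e2, e3, e4, e5, e6] using ⟨hg6, hg7⟩, 4, fun c hc => ?_⟩
    have t1 := hc.add_of_add_eq ha hb r2 (by rw [d2]; module)
    have t2 := hc.add_of_add_eq r2 r3 r4 (by rw [d4, d3, d2]; module)
    have t3 := hc.add_of_add_eq ha r4 r5 (by rw [d5, d4, d3, d2]; module)
    have t4 := hc.add_of_add_eq ha r2 r4 (by rw [d4, d3, d2]; module)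
    simp only [Finset.sum_range_succ, Finset.sum_range_zero, Function.iterate_succ_apply,
      Function.iterate_zero_apply, e1, e2, e3, e4, e5, hg6, hc.neg]
    linear_combination t1 + t2 + t3 + t4
  · have hg6 : g6 = -a := by rw [d6, d5, d4, d3, d2]; module
    have hg7 : g7 = -b := by rw [d7, hg6, d5, d4, d3, d2]; module
    refine ⟨6, by norm_num, by simpa [e1, e2, e3, e4, e5, e6] using ⟨hg6, hg7⟩, 4, fun c hc => ?_⟩
    have t1 := hc.add_of_add_eq ha hb r5 (by rw [d5, d4, d3, d2]; module)
    have t2 := hc.add_of_add_eq hb r2 r3 (by rw [d3, d2]; module)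
    have t3 := hc.add_of_add_eq r3 r4 r5 (by rw [d5, d4, d3, d2]; module)
    have t4 := hc.add_of_add_eq hb r3 r5 (by rw [d5, d4, d3, d2]; module)
    simp only [Finset.sum_range_succ, Finset.sum_range_zero, Function.iterate_succ_apply,
      Function.iterate_zero_apply, e1, e2, e3, e4, e5, hg6, hc.neg]
    linear_combination t1 + t2 + t3 + t4

theorem k_neg (D : HOData E) {α : E} (hα : α ∈ D.R) : D.k (-α) = D.k α := by
  rw [← rRefl_self (D.root_ne_zero α hα), D.k_inv α hα α hα]

/-- The weight `k_α k_β (α, β)` is constant along the orbits of `rotStep`. -/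
theorem weight_rotStep_iterate {D : HOData E} {τ : E → E} {p : E × E}
    (hp : p ∈ acutePairs D τ) (i : ℕ) :
    D.k (rotStep^[i] p).1 * D.k (rotStep^[i] p).2 * ⟪(rotStep^[i] p).1, (rotStep^[i] p).2⟫ =
      D.k p.1 * D.k p.2 * ⟪p.1, p.2⟫ := by
  induction i with
  | zero => rfl
  | succ i ih =>
    rw [← ih, Function.iterate_succ_apply']
    obtain ⟨h1, h2⟩ := (mem_acutePairs.mp (rotStep_iterate_mem_acutePairs hp i)).1
    generalize rotStep^[i] p = q at h1 h2
    rw [inner_rotStep (D.root_ne_zero _ h2)]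
    simp only [rotStep]
    rw [k_neg D (D.refl_mem _ h2 _ h1), D.k_inv _ h2 _ h1]
    ring

/-- If a sequence of values repeats with period `N`, and sums to zero over a period, then it sums
to zero over any multiple of the period. -/
theorem sum_range_mul_eq_zero {f : ℕ → ℝ} {N : ℕ} (hf : ∀ i, f (N + i) = f i)
    (h : ∑ i ∈ Finset.range N, f i = 0) (j : ℕ) : ∑ i ∈ Finset.range (N * j), f i = 0 := by
  induction j with
  | zero => simp
  | succ j ih =>
    rw [Nat.mul_succ, add_comm, Finset.sum_range_add, h]
    simp [hf, ih]

theorem sum_acutePairs_eq_zero {D : HOData E} {τ : E → E} (hτ : τ ≠ id) {c s : E → ℝ}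
    (hc : IsCothLike D c) (hs : IsCothLike D s) :
    ∑ p ∈ acutePairs D τ,
      D.k p.1 * D.k p.2 * ⟪p.1, p.2⟫ * (c p.1 * c p.2 - s p.1 * s p.2) = 0 := by
  set f : E × E → ℝ := fun p =>
    D.k p.1 * D.k p.2 * ⟪p.1, p.2⟫ * (c p.1 * c p.2 - s p.1 * s p.2) with hf
  have horbit : ∀ p ∈ acutePairs D τ, ∑ i ∈ Finset.range 12, f (rotStep^[i] p) = 0 := by
    intro p hp
    obtain ⟨N, ⟨j, hj⟩, hN, K, hK⟩ := exists_sum_rotStep_iterate_eq hτ hp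
    simp only [hf, weight_rotStep_iterate hp]
    rw [hj, ← Finset.mul_sum, sum_range_mul_eq_zero _ _ j, mul_zero]
    · intro i
      rw [add_comm, Function.iterate_add_apply, hN, rotStep_iterate_neg]
      simp [hc.neg, hs.neg]
    · rw [Finset.sum_sub_distrib, hK c hc, hK s hs, sub_self]
  have h12 := Finset.sum_eq_zero horbit
  rw [Finset.sum_comm] at h12
  simp only [sum_acutePairs_rotStep_iterate D τ f] at h12
  simpa using h12

theorem sum_roots_eq_sum_pos (D : HOData E) (f : E → ℝ) :
    ∑ α ∈ D.R, f α = ∑ α ∈ D.Rpos, (f α + f (-α)) := by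
  obtain ⟨u, hu⟩ := D.pos_char
  have hunion : D.R = D.Rpos ∪ D.Rpos.image Neg.neg := by
    ext α
    simp only [Finset.mem_union, Finset.mem_image]
    constructor
    · exact fun h => (D.pos_or_neg α h).imp id fun h' => ⟨-α, h', neg_neg α⟩
    · rintro (h | ⟨β, h, rfl⟩)
      · exact D.pos_subset h
      · exact D.neg_mem _ (D.pos_subset h)
  have hdisj : Disjoint D.Rpos (D.Rpos.image Neg.neg) := by
    rw [Finset.disjoint_left]
    intro α h h'
    obtain ⟨β, hβ, rfl⟩ := Finset.mem_image.mp h'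
    have h1 := (hu _ (D.pos_subset h)).mp h
    have h2 := (hu _ (D.pos_subset hβ)).mp hβ
    rw [inner_neg_left] at h1
    linarith
  rw [hunion, Finset.sum_union hdisj, Finset.sum_image (fun _ _ _ _ h => neg_injective h),
    Finset.sum_add_distrib]

/-- For a summand even in each root, the sum over acute pairs of roots is twice the sum over pairs
of positive roots. -/
theorem sum_acutePairs_eq_two_mul (D : HOData E) (τ : E → E) (f : E → E → ℝ)
    (hl : ∀ α ∈ D.R, ∀ β ∈ D.R, f (-α) β = f α β) (hr : ∀ α ∈ D.R, ∀ β ∈ D.R, f α (-β) = f α β)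
    (h0 : ∀ α β, ⟪α, β⟫ = 0 → f α β = 0) :
    ∑ p ∈ acutePairs D τ, f p.1 p.2 = 2 * ∑ p ∈ rotPairs D τ, f p.1 p.2 := by
  rw [acutePairs, rotPairs, Finset.sum_filter, Finset.sum_filter, Finset.sum_product,
    Finset.sum_product, sum_roots_eq_sum_pos, Finset.mul_sum]
  refine Finset.sum_congr rfl fun α hα => ?_
  rw [sum_roots_eq_sum_pos, sum_roots_eq_sum_pos, Finset.mul_sum, ← Finset.sum_add_distrib]
  refine Finset.sum_congr rfl fun β hβ => ?_
  have hα' := D.pos_subset hα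
  have hβ' := D.pos_subset hβ
  simp only [rRefl_neg_left, inner_neg_left, inner_neg_right, neg_neg, hl α hα' _ hβ',
    hl α hα' _ (D.neg_mem _ hβ'), hr α hα' β hβ']
  by_cases hτ : (fun x => rRefl β (rRefl α x)) = τ
  · rcases lt_trichotomy ⟪α, β⟫ 0 with h | h | h
    · simp [hτ, h, h.not_gt, two_mul]
    · simp [h, h0]
    · simp [hτ, h, h.not_gt, two_mul]
  · simp [hτ]

/-- for every nontrivial rotation `τ = r_β ∘ r_α` (α, β positive roots)
and every regular `x`,
`Σ_{α,β ∈ R⁺, r_β r_α = τ} k_α k_β (α,β) (coth((α,x)/2) coth((β,x)/2) - 1) = 0`. -/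
theorem statement18 (D : HOData E) (τ : E → E) (hτ : τ ≠ id)
    (hrot : ∃ α ∈ D.Rpos, ∃ β ∈ D.Rpos, τ = fun x => rRefl β (rRefl α x))
    (x : E) (hx : HORegular D x) :
    ∑ p ∈ rotPairs D τ,
      D.k p.1 * D.k p.2 * ⟪p.1, p.2⟫ *
        (cothR (⟪p.1, x⟫ / 2) * cothR (⟪p.2, x⟫ / 2) - 1) = 0 := by
  obtain ⟨u, hu⟩ := D.pos_char
  have hureg : HORegular D u := by
    intro α hα
    rcases D.pos_or_neg α hα with h | h
    · exact ((hu α hα).mp h).ne'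
    · have := (hu _ (D.neg_mem α hα)).mp h
      rw [inner_neg_left] at this
      linarith
  have hc := isCothLike_cothR D hx
  have hs := isCothLike_sign D hureg
  have hsum := sum_acutePairs_eq_zero hτ hc hs
  rw [sum_acutePairs_eq_two_mul D τ (fun α β => D.k α * D.k β * ⟪α, β⟫ *
    (cothR (⟪α, x⟫ / 2) * cothR (⟪β, x⟫ / 2)
      - (SignType.sign ⟪α, u⟫ : ℝ) * (SignType.sign ⟪β, u⟫ : ℝ)))] at hsum
  · rw [← (mul_eq_zero_iff_left two_ne_zero).mp hsum]
    refine Finset.sum_congr rfl fun p hp => ?_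
    obtain ⟨h1, h2⟩ := Finset.mem_product.mp (Finset.mem_filter.mp hp).1
    rw [sign_pos ((hu _ (D.pos_subset h1)).mp h1), sign_pos ((hu _ (D.pos_subset h2)).mp h2)]
    simp
  · intro α hα β _
    have h1 := hc.neg α
    have h2 := hs.neg α
    rw [h1, h2, k_neg D hα, inner_neg_left]
    ring
  · intro α _ β hβ
    have h1 := hc.neg β
    have h2 := hs.neg β
    rw [h1, h2, k_neg D hβ, inner_neg_right]
    ring
  · intro α β h
    simp [h]
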